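/- Let G(x,u) = A x + B u + f(x,u) with ‖f(x,u)‖ ≤ β(‖x‖² + ‖u‖²) whenever ‖x‖ + ‖u‖ ≤ r_nl. Let γ ∈ (0,1], Q ⪰ I, R ⪰ I, and let K ∈ ℝ^{m×d} be such that √γ·(A + BK) is stable, with Lyapunov solution P = P_{K,γ}. Then for every x ∈ ℝ^d with xᵀ P x ≤ r_nl² / (4 β² ‖P‖_op³), it holds that γ · G(x, Kx)ᵀ P G(x, Kx) ≤ (1 − 1/(2‖P‖_op)) · xᵀ P x. -/

import Mathlib

open Matrix

/-- A real square matrix is stable if every complex eigenvalue has modulus `< 1`. -/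
def IsStable {n : ℕ} (M : Matrix (Fin n) (Fin n) ℝ) : Prop :=
  ∀ μ ∈ spectrum ℂ (M.map Complex.ofReal), ‖μ‖ < 1

/-- Euclidean operator norm of a real matrix. -/
noncomputable def opNorm {p q : ℕ} (M : Matrix (Fin p) (Fin q) ℝ) : ℝ :=
  ‖LinearMap.toContinuousLinearMap (Matrix.toEuclideanLin M)‖

/-- Euclidean norm of a vector in `ℝ^n`. -/
noncomputable def evnorm {n : ℕ} (x : Fin n → ℝ) : ℝ :=
  ‖(WithLp.equiv 2 (Fin n → ℝ)).symm x‖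

/-- `P_{K,γ} = Σ_t γ^t ((A+BK)^t)ᵀ (Q + KᵀRK) (A+BK)^t`, the solution of the discounted
Lyapunov equation when `√γ (A+BK)` is stable. -/
noncomputable def lyapP {d m : ℕ} (A : Matrix (Fin d) (Fin d) ℝ) (B : Matrix (Fin d) (Fin m) ℝ)
    (Q : Matrix (Fin d) (Fin d) ℝ) (R : Matrix (Fin m) (Fin m) ℝ)
    (K : Matrix (Fin m) (Fin d) ℝ) (γ : ℝ) : Matrix (Fin d) (Fin d) ℝ :=
  ∑' t : ℕ, γ ^ t • (((A + B * K) ^ t)ᵀ * (Q + Kᵀ * R * K) * (A + B * K) ^ t)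

/-!
Write `N = √γ (A + BK)`, so that `P = ∑ (Nᵗ)ᵀ S Nᵗ` with `S = Q + KᵀRK` solves `P = S + NᵀPN`; the
series converges by Gelfand's formula. Let `V = xᵀPx`, `s = ‖x‖² + ‖Kx‖²` and `θ = 1 / (2‖P‖)`.
Since `S` dominates `I + KᵀK`, one has `2θV ≤ s ≤ V` and `(Nx)ᵀP(Nx) ≤ V - s`, while smallness of
`V` makes the remainder `h = √γ f(x, Kx)` satisfy `hᵀPh ≤ θ²s² / V`. Convexity of `z ↦ zᵀPz` with
weights `1 - θ` and `θ` gives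
`(Nx + h)ᵀP(Nx + h) ≤ (V - s) / (1 - θ) + θs² / V ≤ (1 - θ) V`,
where the last step is an elementary inequality on `2θ ≤ s / V ≤ 1`.
-/

open Filter
open scoped NNReal

theorem eventually_norm_pow_le_of_spectralRadius_lt {𝔸 : Type*} [NormedRing 𝔸] [NormedAlgebra ℂ 𝔸]
    [CompleteSpace 𝔸] {a : 𝔸} {r : ℝ≥0} (h : spectralRadius ℂ a < r) :
    ∀ᶠ k : ℕ in atTop, ‖a ^ k‖ ≤ (r : ℝ) ^ k := by
  have gelfand := spectrum.pow_nnnorm_pow_one_div_tendsto_nhds_spectralRadius a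
  filter_upwards [gelfand.eventually_lt_const h, eventually_gt_atTop 0] with k hk hk0
  have hk0' : (0 : ℝ) < k := by exact_mod_cast hk0
  rw [one_div, ENNReal.rpow_inv_lt_iff hk0', ENNReal.rpow_natCast] at hk
  exact_mod_cast hk.le

section Frobenius

attribute [local instance] Matrix.frobeniusNormedRing Matrix.frobeniusNormedAlgebra

theorem IsStable.spectralRadius_lt_one {n : ℕ} {M : Matrix (Fin n) (Fin n) ℝ} (hM : IsStable M) :
    spectralRadius ℂ (M.map Complex.ofReal) < 1 := by
  rcases subsingleton_or_nontrivial (Matrix (Fin n) (Fin n) ℂ) with _ | _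
  · simp [Subsingleton.elim (M.map Complex.ofReal) 0]
  · exact_mod_cast spectrum.spectralRadius_lt_of_forall_lt (r := 1) _ hM

theorem IsStable.exists_eventually_norm_pow_le {n : ℕ} {M : Matrix (Fin n) (Fin n) ℝ}
    (hM : IsStable M) : ∃ r : ℝ≥0, r < 1 ∧ ∀ᶠ k : ℕ in atTop, ‖M ^ k‖ ≤ (r : ℝ) ^ k := by
  obtain ⟨r, hMr, hr⟩ := ENNReal.lt_iff_exists_nnreal_btwn.1 hM.spectralRadius_lt_one
  refine ⟨r, by exact_mod_cast hr, ?_⟩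
  filter_upwards [eventually_norm_pow_le_of_spectralRadius_lt hMr] with k hk
  have map_pow_eq : (M ^ k).map Complex.ofReal = M.map Complex.ofReal ^ k :=
    map_pow (Complex.ofRealHom.mapMatrix (m := Fin n)) M k
  rwa [← map_pow_eq, Matrix.frobenius_norm_map_eq _ _ Complex.norm_real] at hk

theorem IsStable.summable_transpose_pow_mul_mul_pow {n : ℕ} {M : Matrix (Fin n) (Fin n) ℝ}
    (hM : IsStable M) (S : Matrix (Fin n) (Fin n) ℝ) :
    Summable fun t : ℕ => (M ^ t)ᵀ * S * M ^ t := by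
  obtain ⟨r, hr, hpow⟩ := hM.exists_eventually_norm_pow_le
  have hgeom : Summable fun t : ℕ => ‖S‖ * ((r : ℝ) ^ 2) ^ t :=
    (summable_geometric_of_lt_one (by positivity) (pow_lt_one₀ r.2 hr two_ne_zero)).mul_left _
  refine hgeom.of_norm_bounded_eventually_nat ?_
  filter_upwards [hpow] with t ht
  calc ‖(M ^ t)ᵀ * S * M ^ t‖ ≤ ‖(M ^ t)ᵀ‖ * ‖S‖ * ‖M ^ t‖ := norm_mul₃_le
    _ = ‖S‖ * ‖M ^ t‖ ^ 2 := by rw [Matrix.frobenius_norm_transpose]; ring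
    _ ≤ ‖S‖ * ((r : ℝ) ^ t) ^ 2 := by gcongr
    _ = ‖S‖ * ((r : ℝ) ^ 2) ^ t := by rw [pow_right_comm]

end Frobenius

section PosSemidef

variable {ι : Type*}

open scoped ComplexOrder in
theorem isClosed_setOf_posSemidef (𝕜 : Type*) [RCLike 𝕜] :
    IsClosed {M : Matrix ι ι 𝕜 | M.PosSemidef} := by
  simp only [Matrix.PosSemidef, Matrix.IsHermitian, Finsupp.sum, Set.ofPred_and, Set.ofPred_forall]
  refine .inter (isClosed_eq (by fun_prop) continuous_id) (isClosed_iInter fun x => ?_)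
  exact isClosed_le continuous_const (by fun_prop)

open scoped ComplexOrder in
theorem posSemidef_tsum {α 𝕜 : Type*} [RCLike 𝕜] {f : α → Matrix ι ι 𝕜}
    (hf : ∀ i, (f i).PosSemidef) : (∑' i, f i).PosSemidef := by
  by_cases h : Summable f
  · exact (isClosed_setOf_posSemidef 𝕜).mem_of_tendsto h.hasSum
      (.of_forall fun s => Matrix.posSemidef_sum s fun i _ => hf i)
  · simpa [tsum_eq_zero_of_not_summable h] using Matrix.PosSemidef.zero

theorem posSemidef_add_transpose_mul_mul {κ : Type*} [Finite ι] [Fintype κ] [DecidableEq ι]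
    [DecidableEq κ] {Q : Matrix ι ι ℝ} {R : Matrix κ κ ℝ} (hQ : (Q - 1).PosSemidef)
    (hR : (R - 1).PosSemidef) (K : Matrix κ ι ℝ) : (Q + Kᵀ * R * K).PosSemidef := by
  have hQ' : Q.PosSemidef := by simpa using hQ.add .one
  have hR' : R.PosSemidef := by simpa using hR.add .one
  simpa using hQ'.add (hR'.conjTranspose_mul_mul_same K)

end PosSemidef

section QuadraticForm

variable {ι κ : Type*} [Fintype ι] [Fintype κ]

theorem dotProduct_transpose_mul_mul_mulVec {R : Type*} [CommSemiring R] (N : Matrix κ ι R)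
    (S : Matrix κ κ R) (x : ι → R) :
    x ⬝ᵥ (Nᵀ * S * N) *ᵥ x = (N *ᵥ x) ⬝ᵥ S *ᵥ (N *ᵥ x) := by
  rw [← Matrix.mulVec_mulVec, ← Matrix.mulVec_mulVec, Matrix.dotProduct_mulVec x,
    Matrix.vecMul_transpose]

theorem mul_dotProduct_mulVec_eq_sqrt_smul {c : ℝ} (hc : 0 ≤ c) (M : Matrix ι ι ℝ) (x : ι → ℝ) :
    c * (x ⬝ᵥ M *ᵥ x) = (√c • x) ⬝ᵥ M *ᵥ (√c • x) := by
  simp [Matrix.mulVec_smul, ← mul_assoc, Real.mul_self_sqrt hc]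

theorem dotProduct_mulVec_add_le_div_add_div {P : Matrix ι ι ℝ} (hP : P.PosSemidef) {θ : ℝ}
    (hθ₀ : 0 < θ) (hθ₁ : θ < 1) (a b : ι → ℝ) :
    (a + b) ⬝ᵥ P *ᵥ (a + b) ≤ a ⬝ᵥ P *ᵥ a / (1 - θ) + b ⬝ᵥ P *ᵥ b / θ := by
  have h := hP.dotProduct_mulVec_nonneg (θ • a - (1 - θ) • b)
  simp only [star_trivial, Matrix.mulVec_sub, Matrix.mulVec_smul, dotProduct_sub, sub_dotProduct,
    dotProduct_smul, smul_dotProduct, smul_eq_mul] at h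
  simp only [Matrix.mulVec_add, dotProduct_add, add_dotProduct]
  rw [div_add_div _ _ (sub_pos.2 hθ₁).ne' hθ₀.ne', le_div_iff₀ (mul_pos (sub_pos.2 hθ₁) hθ₀)]
  linarith

end QuadraticForm

section LyapunovSeries

variable {ι : Type*} [Fintype ι] [DecidableEq ι]

/-- The series `∑ (Nᵗ)ᵀ S Nᵗ` solving the undiscounted Lyapunov equation `X = S + NᵀXN`. A discount
factor `γ` is encoded by scaling `N` by `√γ`. As with any `tsum`, the value is `0` if the series
diverges. -/
noncomputable def lyapunovSeries (N S : Matrix ι ι ℝ) : Matrix ι ι ℝ :=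
  ∑' t : ℕ, (N ^ t)ᵀ * S * N ^ t

theorem lyapunovSeries_eq_add {N S : Matrix ι ι ℝ}
    (h : Summable fun t : ℕ => (N ^ t)ᵀ * S * N ^ t) :
    lyapunovSeries N S = S + Nᵀ * lyapunovSeries N S * N := by
  have shift (t : ℕ) :
      (N ^ (t + 1))ᵀ * S * N ^ (t + 1) = Nᵀ * ((N ^ t)ᵀ * S * N ^ t) * N := by
    simp only [pow_succ N, Matrix.transpose_mul, Matrix.mul_assoc]
  calc lyapunovSeries N S
      = (N ^ 0)ᵀ * S * N ^ 0 + ∑' t : ℕ, (N ^ (t + 1))ᵀ * S * N ^ (t + 1) := h.tsum_eq_zero_add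
    _ = S + ∑' t : ℕ, Nᵀ * ((N ^ t)ᵀ * S * N ^ t) * N := by simp only [shift]; simp
    _ = S + Nᵀ * lyapunovSeries N S * N := by
      rw [(h.mul_left _).tsum_mul_right, h.tsum_mul_left, lyapunovSeries]

theorem posSemidef_lyapunovSeries {S : Matrix ι ι ℝ} (hS : S.PosSemidef)
    (N : Matrix ι ι ℝ) : (lyapunovSeries N S).PosSemidef :=
  posSemidef_tsum fun t => by simpa using hS.conjTranspose_mul_mul_same (N ^ t)

theorem dotProduct_lyapunovSeries_mulVec {N S : Matrix ι ι ℝ}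
    (h : Summable fun t : ℕ => (N ^ t)ᵀ * S * N ^ t) (x : ι → ℝ) :
    x ⬝ᵥ lyapunovSeries N S *ᵥ x =
      x ⬝ᵥ S *ᵥ x + (N *ᵥ x) ⬝ᵥ lyapunovSeries N S *ᵥ (N *ᵥ x) := by
  conv_lhs => rw [lyapunovSeries_eq_add h]
  rw [Matrix.add_mulVec, dotProduct_add, dotProduct_transpose_mul_mul_mulVec]

end LyapunovSeries

theorem lyapP_eq_lyapunovSeries {d m : ℕ} (A : Matrix (Fin d) (Fin d) ℝ)
    (B : Matrix (Fin d) (Fin m) ℝ) (Q : Matrix (Fin d) (Fin d) ℝ) (R : Matrix (Fin m) (Fin m) ℝ)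
    (K : Matrix (Fin m) (Fin d) ℝ) {γ : ℝ} (hγ : 0 ≤ γ) :
    lyapP A B Q R K γ = lyapunovSeries (√γ • (A + B * K)) (Q + Kᵀ * R * K) := by
  unfold lyapP lyapunovSeries
  congr! 2 with t
  rw [smul_pow, Matrix.transpose_smul, Matrix.smul_mul, Matrix.smul_mul, Matrix.mul_smul,
    smul_smul, ← mul_pow, Real.mul_self_sqrt hγ]

section EuclideanNorm

variable {n k : ℕ}

theorem evnorm_nonneg (x : Fin n → ℝ) : 0 ≤ evnorm x := norm_nonneg _

theorem evnorm_eq_zero {x : Fin n → ℝ} : evnorm x = 0 ↔ x = 0 := by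
  simp [evnorm]

theorem evnorm_smul (c : ℝ) (x : Fin n → ℝ) : evnorm (c • x) = |c| * evnorm x :=
  norm_smul c (WithLp.toLp 2 x)

theorem evnorm_sq_eq_dotProduct (x : Fin n → ℝ) : evnorm x ^ 2 = x ⬝ᵥ x := by
  simp [evnorm, EuclideanSpace.real_norm_sq_eq, dotProduct, ← sq]

theorem opNorm_nonneg (M : Matrix (Fin n) (Fin k) ℝ) : 0 ≤ opNorm M := norm_nonneg _

theorem dotProduct_mulVec_le_opNorm_mul (M : Matrix (Fin n) (Fin n) ℝ) (x : Fin n → ℝ) :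
    x ⬝ᵥ M *ᵥ x ≤ opNorm M * evnorm x ^ 2 := by
  set T := (Matrix.toEuclideanLin M).toContinuousLinearMap
  set v := WithLp.toLp 2 x
  calc x ⬝ᵥ M *ᵥ x = inner ℝ (T v) v := by simp [T, v, EuclideanSpace.inner_eq_star_dotProduct]
    _ ≤ ‖T v‖ * ‖v‖ := real_inner_le_norm _ _
    _ ≤ ‖T‖ * ‖v‖ * ‖v‖ := by gcongr; exact T.le_opNorm v
    _ = ‖T‖ * ‖v‖ ^ 2 := by ring

theorem evnorm_sq_le_dotProduct_mulVec {M : Matrix (Fin n) (Fin n) ℝ} (hM : (M - 1).PosSemidef)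
    (x : Fin n → ℝ) : evnorm x ^ 2 ≤ x ⬝ᵥ M *ᵥ x := by
  have h := hM.dotProduct_mulVec_nonneg x
  rwa [star_trivial, Matrix.sub_mulVec, dotProduct_sub, Matrix.one_mulVec, sub_nonneg,
    ← evnorm_sq_eq_dotProduct] at h

theorem evnorm_sq_add_evnorm_sq_le_dotProduct_mulVec {Q : Matrix (Fin n) (Fin n) ℝ}
    {R : Matrix (Fin k) (Fin k) ℝ} (hQ : (Q - 1).PosSemidef) (hR : (R - 1).PosSemidef)
    (K : Matrix (Fin k) (Fin n) ℝ) (x : Fin n → ℝ) :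
    evnorm x ^ 2 + evnorm (K *ᵥ x) ^ 2 ≤ x ⬝ᵥ (Q + Kᵀ * R * K) *ᵥ x := by
  rw [Matrix.add_mulVec, dotProduct_add, dotProduct_transpose_mul_mul_mulVec]
  exact add_le_add (evnorm_sq_le_dotProduct_mulVec hQ x)
    (evnorm_sq_le_dotProduct_mulVec hR (K *ᵥ x))

end EuclideanNorm

section Scalar

variable {𝕂 : Type*} [Field 𝕂] [LinearOrder 𝕂] [IsStrictOrderedRing 𝕂]

theorem sub_div_add_mul_sq_div_le {θ V s : 𝕂} (hθ₀ : 0 < θ) (hθ : θ ≤ 1 / 2) (hV : 0 < V)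
    (hVs : 2 * θ * V ≤ s) (hsV : s ≤ V) :
    (V - s) / (1 - θ) + θ * s ^ 2 / V ≤ (1 - θ) * V := by
  have hθ₁ : 0 < 1 - θ := by linarith
  have hweights : θ * (1 - θ) ≤ 1 / 4 := by linarith [sq_nonneg (1 - 2 * θ)]
  have hslope : 0 ≤ V - θ * (1 - θ) * (s + 2 * θ * V) := by
    nlinarith [mul_le_mul_of_nonneg_right hweights (by nlinarith : 0 ≤ s + 2 * θ * V)]
  -- The gap, factored around the extremal value `s = 2θV`.
  have hgap : (1 - θ) * V * ((1 - θ) * V) - ((V - s) * V + (1 - θ) * (θ * s ^ 2)) =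
      (s - 2 * θ * V) * (V - θ * (1 - θ) * (s + 2 * θ * V)) + (θ * (1 - 2 * θ) * V) ^ 2 := by
    ring
  rw [div_add_div _ _ hθ₁.ne' hV.ne', div_le_iff₀ (mul_pos hθ₁ hV), ← sub_nonneg, hgap]
  exact add_nonneg (mul_nonneg (sub_nonneg.2 hVs) hslope) (sq_nonneg _)

theorem two_mul_le_sq_of_le_div {V p β r : 𝕂} (hβ : 1 ≤ β) (hVp : V ≤ p * V)
    (hV : V ≤ r ^ 2 / (4 * β ^ 2 * p ^ 3)) : 2 * V ≤ r ^ 2 := by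
  rcases le_or_gt V 0 with hV₀ | hV₀
  · linarith [sq_nonneg r]
  · have hp : 1 ≤ p := (le_mul_iff_one_le_left hV₀).1 hVp
    have hconst : 1 ≤ β ^ 2 * p ^ 3 :=
      one_le_mul_of_one_le_of_one_le (one_le_pow₀ hβ) (one_le_pow₀ hp)
    rw [le_div_iff₀ (by linarith)] at hV
    nlinarith

end Scalar

theorem dotProduct_mulVec_add_le_one_sub_mul {ι : Type*} [Fintype ι] {P : Matrix ι ι ℝ}
    (hP : P.PosSemidef) {y h : ι → ℝ} {θ V s : ℝ} (hθ₀ : 0 < θ) (hθ : θ ≤ 1 / 2) (hV : 0 < V)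
    (hVs : 2 * θ * V ≤ s) (hy : s + y ⬝ᵥ P *ᵥ y ≤ V) (hh : h ⬝ᵥ P *ᵥ h ≤ θ ^ 2 * s ^ 2 / V) :
    (y + h) ⬝ᵥ P *ᵥ (y + h) ≤ (1 - θ) * V := by
  have hyy : 0 ≤ y ⬝ᵥ P *ᵥ y := by simpa using hP.dotProduct_mulVec_nonneg y
  have hθ₁ : θ < 1 := by linarith
  calc (y + h) ⬝ᵥ P *ᵥ (y + h)
      ≤ y ⬝ᵥ P *ᵥ y / (1 - θ) + h ⬝ᵥ P *ᵥ h / θ :=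
        dotProduct_mulVec_add_le_div_add_div hP hθ₀ hθ₁ y h
    _ ≤ (V - s) / (1 - θ) + θ ^ 2 * s ^ 2 / V / θ := by
        have := sub_pos.2 hθ₁
        gcongr
        linarith
    _ = (V - s) / (1 - θ) + θ * s ^ 2 / V := by field_simp
    _ ≤ (1 - θ) * V := sub_div_add_mul_sq_div_le hθ₀ hθ hV hVs (by linarith)

theorem dotProduct_mulVec_add_le_of_evnorm_le {n : ℕ} {P : Matrix (Fin n) (Fin n) ℝ}
    (hP : P.PosSemidef) {x y h : Fin n → ℝ} {β s : ℝ} (hxs : evnorm x ^ 2 ≤ s)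
    (hy : s + y ⬝ᵥ P *ᵥ y ≤ x ⬝ᵥ P *ᵥ x) (hh : evnorm h ≤ β * s)
    (hsmall : x ⬝ᵥ P *ᵥ x * (4 * β ^ 2 * opNorm P ^ 3) ≤ 1) :
    (y + h) ⬝ᵥ P *ᵥ (y + h) ≤ (1 - 1 / (2 * opNorm P)) * (x ⬝ᵥ P *ᵥ x) := by
  set V := x ⬝ᵥ P *ᵥ x
  set p := opNorm P
  have hyy : 0 ≤ y ⬝ᵥ P *ᵥ y := by simpa using hP.dotProduct_mulVec_nonneg y
  have hs₀ : 0 ≤ s := (sq_nonneg _).trans hxs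
  have hp₀ : 0 ≤ p := opNorm_nonneg P
  have hV₀ : 0 ≤ V := by simpa using hP.dotProduct_mulVec_nonneg x
  rcases hV₀.eq_or_lt with hV | hV
  · have hs : s = 0 := by linarith
    have hh₀ : h = 0 :=
      evnorm_eq_zero.1 (le_antisymm (by simpa [hs] using hh) (evnorm_nonneg h))
    simpa [hh₀, ← hV, hs] using hy
  · have hVs : V ≤ p * s := (dotProduct_mulVec_le_opNorm_mul P x).trans (by gcongr)
    have hp : 1 ≤ p := (le_mul_iff_one_le_left hV).1 (hVs.trans (by gcongr; linarith))
    refine dotProduct_mulVec_add_le_one_sub_mul hP (by positivity) ?_ hV ?_ hy ?_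
    · gcongr
      linarith
    · field_simp
      exact hVs
    · calc h ⬝ᵥ P *ᵥ h ≤ p * evnorm h ^ 2 := dotProduct_mulVec_le_opNorm_mul P h
        _ ≤ p * (β * s) ^ 2 := by gcongr; exact evnorm_nonneg h
        _ = V * (4 * β ^ 2 * p ^ 3) * ((1 / (2 * p)) ^ 2 * s ^ 2) / V := by field_simp; ring
        _ ≤ (1 / (2 * p)) ^ 2 * s ^ 2 / V := by
          exact div_le_div_of_nonneg_right (mul_le_of_le_one_left (by positivity) hsmall) hV.le

theorem evnorm_add_evnorm_le_of_le_div {n k : ℕ} {P : Matrix (Fin n) (Fin n) ℝ} {x : Fin n → ℝ}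
    {u : Fin k → ℝ} {β r : ℝ} (hβ : 1 ≤ β) (hr : 0 ≤ r)
    (hxu : evnorm x ^ 2 + evnorm u ^ 2 ≤ x ⬝ᵥ P *ᵥ x)
    (hsmall : x ⬝ᵥ P *ᵥ x ≤ r ^ 2 / (4 * β ^ 2 * opNorm P ^ 3)) :
    evnorm x + evnorm u ≤ r := by
  have hx : evnorm x ^ 2 ≤ x ⬝ᵥ P *ᵥ x := (le_add_of_nonneg_right (sq_nonneg _)).trans hxu
  have hVp : x ⬝ᵥ P *ᵥ x ≤ opNorm P * (x ⬝ᵥ P *ᵥ x) :=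
    (dotProduct_mulVec_le_opNorm_mul P x).trans
      (mul_le_mul_of_nonneg_left hx (opNorm_nonneg P))
  refine le_of_sq_le_sq (add_sq_le.trans ?_) hr
  linarith [two_mul_le_sq_of_le_div hβ hVp hsmall]

theorem evnorm_sq_add_evnorm_sq_add_le_lyapunovSeries {n k : ℕ} {N Q : Matrix (Fin n) (Fin n) ℝ}
    {R : Matrix (Fin k) (Fin k) ℝ} (hN : IsStable N) (hQ : (Q - 1).PosSemidef)
    (hR : (R - 1).PosSemidef) (K : Matrix (Fin k) (Fin n) ℝ) (x : Fin n → ℝ) :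
    evnorm x ^ 2 + evnorm (K *ᵥ x) ^ 2 +
        (N *ᵥ x) ⬝ᵥ lyapunovSeries N (Q + Kᵀ * R * K) *ᵥ (N *ᵥ x) ≤
      x ⬝ᵥ lyapunovSeries N (Q + Kᵀ * R * K) *ᵥ x := by
  rw [dotProduct_lyapunovSeries_mulVec (hN.summable_transpose_pow_mul_mul_pow _) x]
  gcongr
  exact evnorm_sq_add_evnorm_sq_le_dotProduct_mulVec hQ hR K x

/-- Lyapunov decrease for the damped nonlinear system: if the remainder
`f(x,u) = G(x,u) - Ax - Bu` is quadratically small near the origin, `Q, R ⪰ I`,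
`√γ(A+BK)` is stable with value matrix `P = P_{K,γ}`, then for every `x` with
`xᵀPx ≤ r_nl²/(4β²‖P‖³)` we have
`γ · G(x,Kx)ᵀ P G(x,Kx) ≤ (1 - 1/(2‖P‖)) xᵀPx`. -/
theorem nonlinear_lyapunov {d m : ℕ}
    (G : (Fin d → ℝ) → (Fin m → ℝ) → (Fin d → ℝ))
    (A : Matrix (Fin d) (Fin d) ℝ) (B : Matrix (Fin d) (Fin m) ℝ)
    (Q : Matrix (Fin d) (Fin d) ℝ) (R : Matrix (Fin m) (Fin m) ℝ)
    (K : Matrix (Fin m) (Fin d) ℝ)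
    (β rnl : ℝ) (hβ : 1 ≤ β) (hrnl0 : 0 < rnl) (hrnl1 : rnl ≤ 1)
    (hf : ∀ (x : Fin d → ℝ) (u : Fin m → ℝ), evnorm x + evnorm u ≤ rnl →
      evnorm (G x u - (A.mulVec x + B.mulVec u)) ≤ β * (evnorm x ^ 2 + evnorm u ^ 2))
    (γ : ℝ) (hγ : γ ∈ Set.Ioc (0 : ℝ) 1)
    (hQ : (Q - 1).PosSemidef) (hR : (R - 1).PosSemidef)
    (hstab : IsStable (Real.sqrt γ • (A + B * K))) :
    ∀ x : Fin d → ℝ,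
      x ⬝ᵥ (lyapP A B Q R K γ).mulVec x
          ≤ rnl ^ 2 / (4 * β ^ 2 * opNorm (lyapP A B Q R K γ) ^ 3) →
      γ * (G x (K.mulVec x) ⬝ᵥ (lyapP A B Q R K γ).mulVec (G x (K.mulVec x)))
        ≤ (1 - 1 / (2 * opNorm (lyapP A B Q R K γ)))
            * (x ⬝ᵥ (lyapP A B Q R K γ).mulVec x) := by
  intro x hx
  rw [lyapP_eq_lyapunovSeries A B Q R K hγ.1.le] at hx ⊢
  set N := √γ • (A + B * K)
  set P := lyapunovSeries N (Q + Kᵀ * R * K)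
  set f := G x (K *ᵥ x) - (A *ᵥ x + B *ᵥ (K *ᵥ x))
  have hP : P.PosSemidef := posSemidef_lyapunovSeries (posSemidef_add_transpose_mul_mul hQ hR K) N
  have hp : 0 ≤ opNorm P := opNorm_nonneg P
  have hdecrease : evnorm x ^ 2 + evnorm (K *ᵥ x) ^ 2 + (N *ᵥ x) ⬝ᵥ P *ᵥ (N *ᵥ x) ≤ x ⬝ᵥ P *ᵥ x :=
    evnorm_sq_add_evnorm_sq_add_le_lyapunovSeries hstab hQ hR K x
  have hnear : evnorm x + evnorm (K *ᵥ x) ≤ rnl :=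
    evnorm_add_evnorm_le_of_le_div hβ hrnl0.le
      (le_of_add_le_of_nonneg_left hdecrease (hP.dotProduct_mulVec_nonneg (N *ᵥ x))) hx
  have hremainder : evnorm (√γ • f) ≤ β * (evnorm x ^ 2 + evnorm (K *ᵥ x) ^ 2) := by
    rw [evnorm_smul, abs_of_nonneg (Real.sqrt_nonneg γ)]
    exact (mul_le_of_le_one_left (evnorm_nonneg f) (Real.sqrt_le_one.2 hγ.2)).trans (hf _ _ hnear)
  have hsmall : x ⬝ᵥ P *ᵥ x * (4 * β ^ 2 * opNorm P ^ 3) ≤ 1 :=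
    (mul_le_of_le_div₀ (sq_nonneg _) (by positivity) hx).trans (pow_le_one₀ hrnl0.le hrnl1)
  have hG : √γ • G x (K *ᵥ x) = N *ᵥ x + √γ • f := by
    simp [N, f, Matrix.smul_mulVec, Matrix.add_mulVec, ← smul_add]
  rw [mul_dotProduct_mulVec_eq_sqrt_smul hγ.1.le, hG]
  exact dotProduct_mulVec_add_le_of_evnorm_le hP (le_add_of_nonneg_right (sq_nonneg _)) hdecrease
    hremainder hsmall
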